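/- arXiv:2102.07366 — 2 statements merged into one kernel-verified Lean document; each statement's English description precedes it below -/
import Mathlib

section
/- Under the SC-OGM setup, define zₖ = ((2γ+1)/γ)xₖ − ((γ+1)/γ)yₖ and Uₖ = (1+γ)^k (f(xₖ) − f(x⋆) − (1/(2L))‖∇f(xₖ)‖² + (μ/2)‖z_{k+1} − x⋆‖²). Then the sequence {Uₖ}_{k≥0} is nonincreasing and U₀ ≤ ((μ+2L)/2)‖x₀ − x⋆‖². -/
open RealInnerProductSpace

/-!
The momentum recursion amounts to `(1 + γ) zₖ₊₁ = zₖ + γ xₖ - (γ / μ) ∇f(xₖ)` precisely because `γ`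
is the positive root of `L γ² = μ (γ + 1) (γ + 2)`. Expanding `‖zₖ₊₁ - x⋆‖²` then produces the inner
products of `∇f(xₖ)` with `yₖ - xₖ` and with `x⋆ - xₖ`. The first is absorbed by the interpolation
inequality of smooth convex functions between `xₖ` and `xₖ₋₁`, the second by strong convexity
between `xₖ` and `x⋆`.
-/

variable {E : Type*} [NormedAddCommGroup E] [InnerProductSpace ℝ E]

section SmoothConvex

variable [CompleteSpace E] {f : E → ℝ} {f' : E → E} {s : Set E} {x y g : E} {L m : ℝ}

lemma hasDerivAt_comp_lineMap_of_hasGradientAt {t : ℝ}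
    (h : HasGradientAt f g (AffineMap.lineMap x y t)) :
    HasDerivAt (fun t : ℝ => f (AffineMap.lineMap x y t)) ⟪g, y - x⟫ t :=
  h.hasFDerivAt.comp_hasDerivAt t AffineMap.hasDerivAt_lineMap

lemma hasGradientAt_norm_sq (x : E) : HasGradientAt (fun u : E => ‖u‖ ^ 2) ((2 : ℝ) • x) x := by
  rw [hasGradientAt_iff_hasFDerivAt, map_smul, ofNat_smul_eq_nsmul]
  exact (hasStrictFDerivAt_norm_sq x).hasFDerivAt

lemma eq_zero_of_hasGradientAt_of_forall_le (h : HasGradientAt f g x) (hmin : ∀ u, f x ≤ f u) :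
    g = 0 := by
  have hlocal : IsLocalMin f x := Filter.Eventually.of_forall hmin
  simpa only [map_eq_zero_iff _ (InnerProductSpace.toDual ℝ E).injective]
    using hlocal.hasFDerivAt_eq_zero h.hasFDerivAt

lemma add_inner_le_of_convexOn (hf : ConvexOn ℝ s f) (hx : x ∈ s) (hy : y ∈ s)
    (h : HasGradientAt f g x) : f x + ⟪g, y - x⟫ ≤ f y := by
  have hline : ConvexOn ℝ (AffineMap.lineMap x y ⁻¹' s) (f ∘ AffineMap.lineMap (k := ℝ) x y) :=
    hf.comp_affineMap _
  have hslope := hline.le_slope_of_hasDerivAt (x := 0) (y := 1) (by simpa using hx)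
    (by simpa using hy) zero_lt_one (hasDerivAt_comp_lineMap_of_hasGradientAt (by simpa using h))
  simp only [slope_def_field, Function.comp_apply, AffineMap.lineMap_apply_one,
    AffineMap.lineMap_apply_zero, sub_zero, div_one] at hslope
  linarith

lemma add_inner_add_norm_sq_le_of_strongConvexOn (hf : StrongConvexOn s m f) (hx : x ∈ s)
    (hy : y ∈ s) (h : HasGradientAt f g x) :
    f x + ⟪g, y - x⟫ + m / 2 * ‖y - x‖ ^ 2 ≤ f y := by
  have hgrad : HasGradientAt (fun u => f u - m / 2 * ‖u‖ ^ 2) (g - (m / 2) • (2 : ℝ) • x) x := by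
    rw [hasGradientAt_iff_hasFDerivAt, map_sub, map_smul]
    exact h.hasFDerivAt.sub ((hasGradientAt_norm_sq x).hasFDerivAt.const_mul (m / 2))
  have htangent := add_inner_le_of_convexOn (strongConvexOn_iff_convex.1 hf) hx hy hgrad
  simp only [inner_sub_left, inner_sub_right, real_inner_smul_left,
    real_inner_self_eq_norm_sq] at htangent
  rw [norm_sub_sq_real, real_inner_comm x y, inner_sub_right]
  linarith

/- The derivative of the gap between `f` and the quadratic upper bound, along the segment, is
nonpositive by Cauchy-Schwarz. -/
lemma le_add_inner_add_norm_sq_of_lipschitz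
    (hd : ∀ u ∈ segment ℝ x y, HasGradientAt f (f' u) u)
    (hL : ∀ u ∈ segment ℝ x y, ‖f' u - f' x‖ ≤ L * ‖u - x‖) :
    f y ≤ f x + ⟪f' x, y - x⟫ + L / 2 * ‖y - x‖ ^ 2 := by
  let p (t : ℝ) : E := AffineMap.lineMap x y t
  have hp {t : ℝ} (ht : t ∈ Set.Icc (0 : ℝ) 1) : p t ∈ segment ℝ x y := by
    rw [segment_eq_image_lineMap]
    exact Set.mem_image_of_mem _ ht
  have hf {t : ℝ} (ht : t ∈ Set.Icc (0 : ℝ) 1) :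
      HasDerivAt (fun t => f (p t)) ⟪f' (p t), y - x⟫ t :=
    hasDerivAt_comp_lineMap_of_hasGradientAt (hd _ (hp ht))
  have hB (t : ℝ) : HasDerivAt
      (fun t : ℝ => f x + t * ⟪f' x, y - x⟫ + t ^ 2 * (L / 2 * ‖y - x‖ ^ 2))
      (⟪f' x, y - x⟫ + 2 * t * (L / 2 * ‖y - x‖ ^ 2)) t := by
    refine ((((hasDerivAt_id t).mul_const ⟪f' x, y - x⟫).const_add (f x)).add
      (((hasDerivAt_id t).pow 2).mul_const (L / 2 * ‖y - x‖ ^ 2))).congr_deriv ?_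
    simp
  have hbound {t : ℝ} (ht : t ∈ Set.Icc (0 : ℝ) 1) :
      ⟪f' (p t), y - x⟫ ≤ ⟪f' x, y - x⟫ + 2 * t * (L / 2 * ‖y - x‖ ^ 2) := by
    have hpt : ‖p t - x‖ = t * ‖y - x‖ := by
      simp [p, AffineMap.lineMap_apply, norm_smul, abs_of_nonneg ht.1]
    calc ⟪f' (p t), y - x⟫ = ⟪f' x, y - x⟫ + ⟪f' (p t) - f' x, y - x⟫ := by
          rw [inner_sub_left]; ring
      _ ≤ ⟪f' x, y - x⟫ + ‖f' (p t) - f' x‖ * ‖y - x‖ := by gcongr; exact real_inner_le_norm _ _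
      _ ≤ ⟪f' x, y - x⟫ + L * ‖p t - x‖ * ‖y - x‖ := by gcongr; exact hL _ (hp ht)
      _ = ⟪f' x, y - x⟫ + 2 * t * (L / 2 * ‖y - x‖ ^ 2) := by rw [hpt]; ring
  have hle := image_le_of_deriv_right_le_deriv_boundary
    (fun t ht => (hf ht).continuousAt.continuousWithinAt)
    (fun t ht => (hf (Set.Ico_subset_Icc_self ht)).hasDerivWithinAt) (by simp [p])
    (fun t _ => (hB t).continuousAt.continuousWithinAt) (fun t _ => (hB t).hasDerivWithinAt)
    (fun t ht => hbound (Set.Ico_subset_Icc_self ht)) (Set.right_mem_Icc.2 zero_le_one)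
  simpa [p] using hle

/- The gradient step `x - (1 / L) ∇f(x)` minimizes the quadratic upper bound of `f` at `x`. -/
lemma add_norm_sq_gradient_le_of_forall_le (hL : 0 < L) (hd : ∀ u, HasGradientAt f (f' u) u)
    (hlip : ∀ u v, ‖f' u - f' v‖ ≤ L * ‖u - v‖) {c : ℝ} (hc : ∀ u, c ≤ f u) (x : E) :
    c + 1 / (2 * L) * ‖f' x‖ ^ 2 ≤ f x := by
  have hstep : f (x - (1 / L) • f' x) ≤ f x - 1 / (2 * L) * ‖f' x‖ ^ 2 := by
    refine (le_add_inner_add_norm_sq_of_lipschitz (fun u _ => hd u)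
      fun u _ => hlip u x).trans_eq ?_
    simp only [sub_sub_cancel_left, inner_neg_right, inner_smul_right, norm_neg, norm_smul,
      real_inner_self_eq_norm_sq, mul_pow, Real.norm_eq_abs, sq_abs]
    field_simp
    ring
  linarith [hc (x - (1 / L) • f' x)]

/- Subtracting the tangent at `x` from `f` leaves a function that is minimal at `x`. -/
lemma add_inner_add_norm_sq_gradient_sub_le (hL : 0 < L) (hf : ConvexOn ℝ Set.univ f)
    (hd : ∀ u, HasGradientAt f (f' u) u) (hlip : ∀ u v, ‖f' u - f' v‖ ≤ L * ‖u - v‖) (x y : E) :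
    f x + ⟪f' x, y - x⟫ + 1 / (2 * L) * ‖f' y - f' x‖ ^ 2 ≤ f y := by
  have hgrad (u : E) : HasGradientAt (fun u => f u - ⟪f' x, u⟫) (f' u - f' x) u := by
    rw [hasGradientAt_iff_hasFDerivAt, map_sub]
    exact (hd u).hasFDerivAt.sub (InnerProductSpace.toDual ℝ E (f' x)).hasFDerivAt
  have hmin (u : E) : f x - ⟪f' x, x⟫ ≤ f u - ⟪f' x, u⟫ := by
    have := add_inner_le_of_convexOn hf (Set.mem_univ x) (Set.mem_univ u) (hd x)
    rw [inner_sub_right] at this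
    linarith
  have := add_norm_sq_gradient_le_of_forall_le hL hgrad
    (fun u v => by simpa only [sub_sub_sub_cancel_right] using hlip u v) hmin y
  rw [inner_sub_right]
  linarith

lemma add_inner_gradientStep_sub_le (hL : 0 < L) (hf : ConvexOn ℝ Set.univ f)
    (hd : ∀ u, HasGradientAt f (f' u) u) (hlip : ∀ u v, ‖f' u - f' v‖ ≤ L * ‖u - v‖) (x p : E) :
    f x + ⟪f' x, p - (1 / L) • f' p - x⟫ + 1 / (2 * L) * ‖f' x‖ ^ 2
      + 1 / (2 * L) * ‖f' p‖ ^ 2 ≤ f p := by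
  refine (add_inner_add_norm_sq_gradient_sub_le hL hf hd hlip x p).trans_eq' ?_
  simp only [norm_sub_sq_real, inner_sub_right, inner_smul_right, real_inner_comm (f' x) (f' p)]
  field_simp
  ring

end SmoothConvex

namespace ScOGM

section Parameter

variable {κ γ : ℝ}

lemma param_pos (hκ : 1 < κ) (hγ : γ = (Real.sqrt (8 * κ + 1) + 3) / (2 * κ - 2)) : 0 < γ := by
  rw [hγ]
  exact div_pos (by positivity) (by linarith)

lemma mul_param_sq (hκ : 1 < κ) (hγ : γ = (Real.sqrt (8 * κ + 1) + 3) / (2 * κ - 2)) :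
    κ * γ ^ 2 = (γ + 1) * (γ + 2) := by
  have hsqrt : Real.sqrt (8 * κ + 1) = γ * (2 * κ - 2) - 3 := by
    rw [hγ, div_mul_cancel₀ _ (by linarith)]
    ring
  have hsq := Real.sq_sqrt (show 0 ≤ 8 * κ + 1 by linarith)
  rw [hsqrt] at hsq
  refine mul_left_cancel₀ (sub_ne_zero.2 hκ.ne') ?_
  linarith

end Parameter

/-- The point `zₖ` of the Lyapunov analysis, as a function of `x = xₖ` and `y = yₖ`. -/
noncomputable def auxPoint (γ : ℝ) (x y : E) : E := ((2 * γ + 1) / γ) • x - ((γ + 1) / γ) • y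

/-- The step `z ↦ (z + γ x - (γ / μ) g) / (1 + γ)` from `zₖ` to `zₖ₊₁`, where `x = xₖ` and `g` is
the gradient at `xₖ`. -/
noncomputable def mirrorStep (μ γ : ℝ) (z x g : E) : E :=
  (1 / (1 + γ)) • (z + γ • x - (γ / μ) • g)

/-- The Lyapunov function without the factor `(1 + γ) ^ k`, as a function of `x = xₖ` and
`z = zₖ₊₁`; `w` stands for the minimizer. -/
noncomputable def energy (f : E → ℝ) (f' : E → E) (L μ : ℝ) (w x z : E) : ℝ :=
  f x - f w - (1 / (2 * L)) * ‖f' x‖ ^ 2 + (μ / 2) * ‖z - w‖ ^ 2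

section Step

variable {L μ γ : ℝ}

lemma auxPoint_self (hγ : γ ≠ 0) (x : E) : auxPoint γ x x = x := by
  rw [auxPoint]
  match_scalars
  field_simp
  ring

lemma sub_eq_smul_auxPoint_sub (hγ : 0 < γ) (x y : E) :
    y - x = -(γ / (1 + γ)) • (auxPoint γ x y - x) := by
  rw [auxPoint]
  match_scalars <;> (field_simp; ring)

lemma auxPoint_momentumStep (hμ : 0 < μ) (hγ : 0 < γ) (hL : L * γ ^ 2 = μ * ((γ + 1) * (γ + 2)))
    {x y y₁ g : E} (hy₁ : y₁ = x - (1 / L) • g) :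
    auxPoint γ (y₁ + (1 / (2 * γ + 1)) • (y₁ - y) + (1 / (2 * γ + 1)) • (y₁ - x)) y₁
      = mirrorStep μ γ (auxPoint γ x y) x g := by
  obtain rfl : L = μ * ((γ + 1) * (γ + 2)) / γ ^ 2 := eq_div_of_mul_eq (by positivity) hL
  rw [hy₁, auxPoint, auxPoint, mirrorStep]
  match_scalars <;> field_simp <;> ring

lemma norm_sq_mirrorStep_sub (hμ : μ ≠ 0) (hγ : 1 + γ ≠ 0) (z x g w : E) :
    (1 + γ) * (μ / 2 * ‖mirrorStep μ γ z x g - w‖ ^ 2) + μ / 2 * (γ / (1 + γ)) * ‖z - x‖ ^ 2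
      = μ / 2 * ‖z - w‖ ^ 2 + γ * (μ / 2 * ‖w - x‖ ^ 2) - γ / (1 + γ) * ⟪g, z - x⟫
        + γ * ⟪g, w - x⟫ + γ ^ 2 / (2 * μ * (1 + γ)) * ‖g‖ ^ 2 := by
  obtain ⟨a, rfl⟩ : ∃ a, z = a + w := ⟨z - w, by abel⟩
  obtain ⟨b, rfl⟩ : ∃ b, x = b + w := ⟨x - w, by abel⟩
  have hstep : mirrorStep μ γ (a + w) (b + w) g - w
      = (1 / (1 + γ)) • (a + γ • b - (γ / μ) • g) := by
    rw [mirrorStep]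
    match_scalars <;> field_simp
    ring
  rw [hstep, add_sub_add_right_eq_sub, add_sub_cancel_right, sub_add_cancel_right]
  simp only [norm_neg, norm_smul, mul_pow, inner_neg_right, inner_smul_right, inner_sub_right,
    norm_sub_sq_real, norm_add_sq_real, inner_add_left, real_inner_smul_left, Real.norm_eq_abs,
    sq_abs, real_inner_comm a g, real_inner_comm b g]
  field_simp
  ring

lemma norm_sq_mirrorStep_auxPoint_sub_le (hμ : 0 < μ) (hγ : 0 < γ)
    (hL : L * γ ^ 2 = μ * ((γ + 1) * (γ + 2))) (x y g w : E) :
    (1 + γ) * (μ / 2 * ‖mirrorStep μ γ (auxPoint γ x y) x g - w‖ ^ 2)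
      ≤ μ / 2 * ‖auxPoint γ x y - w‖ ^ 2 + γ * (μ / 2 * ‖w - x‖ ^ 2) + ⟪g, y - x⟫
        + γ * ⟪g, w - x⟫ + (γ + 2) * (1 / (2 * L) * ‖g‖ ^ 2) := by
  have hcoef : γ ^ 2 / (2 * μ * (1 + γ)) = (γ + 2) * (1 / (2 * L)) := by
    obtain rfl : L = μ * ((γ + 1) * (γ + 2)) / γ ^ 2 := eq_div_of_mul_eq (by positivity) hL
    field_simp
    ring
  have hgap : 0 ≤ μ / 2 * (γ / (1 + γ)) * ‖auxPoint γ x y - x‖ ^ 2 := by positivity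
  have hexpand := norm_sq_mirrorStep_sub (γ := γ) hμ.ne' (by positivity) (auxPoint γ x y) x g w
  rw [hcoef] at hexpand
  rw [sub_eq_smul_auxPoint_sub hγ x y, real_inner_smul_right]
  linarith

end Step

section Energy

variable [CompleteSpace E] {f : E → ℝ} {f' : E → E} {L μ γ : ℝ} {w : E}

lemma energy_mirrorStep_le (hμ : 0 < μ) (hγ : 0 < γ) (hL : 0 < L)
    (hLγ : L * γ ^ 2 = μ * ((γ + 1) * (γ + 2))) (hf : ConvexOn ℝ Set.univ f)
    (hd : ∀ u, HasGradientAt f (f' u) u) (hlip : ∀ u v, ‖f' u - f' v‖ ≤ L * ‖u - v‖)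
    {p x y : E} (hx : f x + ⟪f' x, w - x⟫ + μ / 2 * ‖w - x‖ ^ 2 ≤ f w)
    (hy : y = p - (1 / L) • f' p) :
    (1 + γ) * energy f f' L μ w x (mirrorStep μ γ (auxPoint γ x y) x (f' x))
      ≤ energy f f' L μ w p (auxPoint γ x y) := by
  have hinterp := add_inner_gradientStep_sub_le hL hf hd hlip x p
  rw [← hy] at hinterp
  have hstrong := mul_le_mul_of_nonneg_left hx hγ.le
  have hdist := norm_sq_mirrorStep_auxPoint_sub_le hμ hγ hLγ x y (f' x) w
  simp only [energy]
  linarith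

lemma energy_mirrorStep_self_le (hμ : 0 < μ) (hγ : 0 < γ) (hL : 0 < L)
    (hLγ : L * γ ^ 2 = μ * ((γ + 1) * (γ + 2))) (hf : ConvexOn ℝ Set.univ f)
    (hd : ∀ u, HasGradientAt f (f' u) u) (hlip : ∀ u v, ‖f' u - f' v‖ ≤ L * ‖u - v‖)
    (hw : ∀ u, f w ≤ f u) (x : E) :
    energy f f' L μ w x (mirrorStep μ γ x x (f' x)) ≤ (μ + 2 * L) / 2 * ‖x - w‖ ^ 2 := by
  have hvalue : f x - f w ≤ L / 2 * ‖x - w‖ ^ 2 := by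
    have := le_add_inner_add_norm_sq_of_lipschitz (x := w) (y := x)
      (fun u _ => hd u) fun u _ => hlip u w
    rw [eq_zero_of_hasGradientAt_of_forall_le (hd w) hw, inner_zero_left] at this
    linarith
  have hgrad := add_norm_sq_gradient_le_of_forall_le hL hd hlip hw x
  have htangent := mul_le_mul_of_nonneg_left
    (add_inner_le_of_convexOn hf (Set.mem_univ x) (Set.mem_univ w) (hd x)) hγ.le
  have hdist := norm_sq_mirrorStep_auxPoint_sub_le hμ hγ hLγ x x (f' x) w
  rw [auxPoint_self hγ.ne', sub_self, inner_zero_right, norm_sub_rev w x] at hdist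
  have hslack : 0 ≤ γ * (L * ‖x - w‖ ^ 2) := by positivity
  refine le_of_mul_le_mul_left ?_ (show 0 < 1 + γ by linarith)
  simp only [energy]
  linarith

end Energy

end ScOGM

open ScOGM

theorem sc_ogm_lyapunov_monotone_general [CompleteSpace E] (f : E → ℝ) (f' : E → E)
    (L μ : ℝ) (hμ : 0 < μ) (hμL : μ < L)
    (hdiff : ∀ x, HasGradientAt f (f' x) x)
    (hconv : ConvexOn ℝ Set.univ f)
    (hsmooth : ∀ x y, ‖f' x - f' y‖ ≤ L * ‖x - y‖)
    (xstar : E) (hmin : ∀ y, f xstar ≤ f y)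
    (hquasi : ∀ x, f x + ⟪f' x, xstar - x⟫ + μ / 2 * ‖xstar - x‖ ^ 2 ≤ f xstar)
    (κ γ : ℝ) (hκ : κ = L / μ)
    (hγ : γ = (Real.sqrt (8 * κ + 1) + 3) / (2 * κ - 2))
    (x y z : ℕ → E)
    (hx0 : y 0 = x 0)
    (hy : ∀ k, y (k + 1) = x k - (1 / L) • f' (x k))
    (hx : ∀ k, x (k + 1) = y (k + 1) + (1 / (2 * γ + 1)) • (y (k + 1) - y k)
      + (1 / (2 * γ + 1)) • (y (k + 1) - x k))
    (hz : ∀ k, z k = ((2 * γ + 1) / γ) • x k - ((γ + 1) / γ) • y k)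
    (U : ℕ → ℝ)
    (hU : ∀ k, U k = (1 + γ) ^ k * (f (x k) - f xstar - (1 / (2 * L)) * ‖f' (x k)‖ ^ 2
      + (μ / 2) * ‖z (k + 1) - xstar‖ ^ 2)) :
    (∀ k, U (k + 1) ≤ U k) ∧ U 0 ≤ ((μ + 2 * L) / 2) * ‖x 0 - xstar‖ ^ 2 := by
  have hL : 0 < L := hμ.trans hμL
  have hκ_gt : 1 < κ := hκ ▸ (one_lt_div hμ).2 hμL
  have hγ_pos : 0 < γ := param_pos hκ_gt hγ
  have hLγ : L * γ ^ 2 = μ * ((γ + 1) * (γ + 2)) := by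
    rw [← mul_param_sq hκ_gt hγ, hκ, ← mul_assoc, mul_div_cancel₀ _ hμ.ne']
  have hz_aux (k : ℕ) : z k = auxPoint γ (x k) (y k) := hz k
  have hz_succ (k : ℕ) : z (k + 1) = mirrorStep μ γ (z k) (x k) (f' (x k)) := by
    rw [hz_aux, hz_aux, hx, auxPoint_momentumStep hμ hγ_pos hLγ (hy k)]
  have hU_energy (k : ℕ) : U k = (1 + γ) ^ k * energy f f' L μ xstar (x k) (z (k + 1)) := hU k
  refine ⟨fun k => ?_, ?_⟩
  · rw [hU_energy, hU_energy, pow_succ, mul_assoc, hz_succ (k + 1), hz_aux (k + 1)]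
    gcongr
    exact energy_mirrorStep_le hμ hγ_pos hL hLγ hconv hdiff hsmooth (hquasi _) (hy k)
  · rw [hU_energy, pow_zero, one_mul, hz_succ, hz_aux, hx0, auxPoint_self hγ_pos.ne']
    exact energy_mirrorStep_self_le hμ hγ_pos hL hLγ hconv hdiff hsmooth hmin _

/-- Lyapunov monotonicity for SC-OGM, together with the bound on the
initial Lyapunov value. -/
theorem sc_ogm_lyapunov_monotone (n : ℕ)
    (f : EuclideanSpace ℝ (Fin n) → ℝ)
    (f' : EuclideanSpace ℝ (Fin n) → EuclideanSpace ℝ (Fin n))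
    (L μ : ℝ) (hμ : 0 < μ) (hμL : μ < L)
    (hdiff : ∀ x, HasGradientAt f (f' x) x)
    (hsconv : ConvexOn ℝ Set.univ (fun x => f x - (μ / 2) * ‖x‖ ^ 2))
    (hsmooth : ∀ x y, ‖f' x - f' y‖ ≤ L * ‖x - y‖)
    (xstar : EuclideanSpace ℝ (Fin n)) (hmin : ∀ y, f xstar ≤ f y)
    (κ γ : ℝ) (hκ : κ = L / μ)
    (hγ : γ = (Real.sqrt (8 * κ + 1) + 3) / (2 * κ - 2))
    (x y z : ℕ → EuclideanSpace ℝ (Fin n))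
    (hx0 : y 0 = x 0)
    (hy : ∀ k, y (k + 1) = x k - (1 / L) • f' (x k))
    (hx : ∀ k, x (k + 1) = y (k + 1) + (1 / (2 * γ + 1)) • (y (k + 1) - y k)
      + (1 / (2 * γ + 1)) • (y (k + 1) - x k))
    (hz : ∀ k, z k = ((2 * γ + 1) / γ) • x k - ((γ + 1) / γ) • y k)
    (U : ℕ → ℝ)
    (hU : ∀ k, U k = (1 + γ) ^ k * (f (x k) - f xstar - (1 / (2 * L)) * ‖f' (x k)‖ ^ 2
      + (μ / 2) * ‖z (k + 1) - xstar‖ ^ 2)) :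
    (∀ k, U (k + 1) ≤ U k) ∧ U 0 ≤ ((μ + 2 * L) / 2) * ‖x 0 - xstar‖ ^ 2 :=
  have hstrong : StrongConvexOn Set.univ μ f := strongConvexOn_iff_convex.2 hsconv
  sc_ogm_lyapunov_monotone_general f f' L μ hμ hμL hdiff
    (hstrong.convexOn fun _ => by positivity) hsmooth xstar hmin
    (fun u => add_inner_add_norm_sq_le_of_strongConvexOn hstrong trivial trivial (hdiff u))
    κ γ hκ hγ x y z hx0 hy hx hz U hU
end

section
/- Under the SC-OGM setup, the secondary sequence satisfies f(xₖ) − f(x⋆) ≤ ((1+γ)^{−k+2}/(2γ)) · ((μ+2L)/2)‖x₀ − x⋆‖² for all k ≥ 1. -/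
open RealInnerProductSpace

/-!
With `z = γ⁻¹ • ((1 + 2γ) • x - (1 + γ) • y)`, the method is a mirror-descent step in `z` coupled
to gradient steps in `y`: `z` moves to a convex combination of itself and `x - f'(x)/μ`. The
coupling is arranged so that the potential
`f(x) - f⋆ + ⟪f'(x), y - x⟫ + ‖f'(x)‖² / (2L) + (μ/2) ‖z - x⋆‖²` shrinks by the factor `1 + γ` at
every iteration. Strong convexity at `x⋆` pays for the mirror step, cocoercivity between consecutive
iterates links the function values, and `L γ² = μ (1 + γ) (2 + γ)`, the equation that `γ` solves, is
exactly what balances the `‖f'(x)‖²` terms. Young's inequality and cocoercivity at `x⋆` bound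
`f(x) - f⋆` by the potential.
-/

section FirstOrder

variable {E : Type*} [NormedAddCommGroup E] [NormedSpace ℝ E]

lemma convexOn_add_fderiv_le {s : Set E} {f : E → ℝ} {f' : E →L[ℝ] ℝ} {x y : E}
    (hf : ConvexOn ℝ s f) (hx : x ∈ s) (hy : y ∈ s) (hfx : HasFDerivAt f f' x) :
    f x + f' (y - x) ≤ f y := by
  have hderiv : HasDerivAt (f ∘ AffineMap.lineMap x y) (f' (y - x)) (0 : ℝ) :=
    HasFDerivAt.comp_hasDerivAt 0 (by simpa using hfx) AffineMap.hasDerivAt_lineMap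
  have hslope := (hf.comp_affineMap (AffineMap.lineMap x y)).le_slope_of_hasDerivAt
    (by simpa using hx) (by simpa using hy) zero_lt_one hderiv
  simp only [slope_def_field, Function.comp_apply, AffineMap.lineMap_apply_zero,
    AffineMap.lineMap_apply_one, sub_zero, div_one] at hslope
  linarith

lemma le_add_fderiv_add_sq_of_lipschitz {f : E → ℝ} {f' : E → E →L[ℝ] ℝ} {L : ℝ}
    (hf : ∀ x, HasFDerivAt f (f' x) x) (hlip : ∀ x y, ‖f' x - f' y‖ ≤ L * ‖x - y‖) (x y : E) :
    f y ≤ f x + f' x (y - x) + L / 2 * ‖y - x‖ ^ 2 := by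
  let gap : ℝ → ℝ := fun t ↦
    f (AffineMap.lineMap x y t) - (t * f' x (y - x) + t ^ 2 * (L / 2 * ‖y - x‖ ^ 2))
  have hderiv (t : ℝ) : HasDerivAt gap (f' (AffineMap.lineMap x y t) (y - x) -
      (f' x (y - x) + t * (L * ‖y - x‖ ^ 2))) t := by
    have hline := (hf _).comp_hasDerivAt t (AffineMap.hasDerivAt_lineMap (a := x) (b := y))
    have hquad := ((hasDerivAt_id t).mul_const (f' x (y - x))).add
      ((hasDerivAt_pow 2 t).mul_const (L / 2 * ‖y - x‖ ^ 2))
    refine (hline.sub hquad).congr_deriv ?_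
    norm_num
    ring
  have hanti : AntitoneOn gap (Set.Ici 0) := by
    refine antitoneOn_of_hasDerivWithinAt_nonpos (convex_Ici 0)
      (fun t _ ↦ (hderiv t).continuousAt.continuousWithinAt)
      (fun t _ ↦ (hderiv t).hasDerivWithinAt) fun t ht ↦ ?_
    have ht0 : 0 ≤ t := (interior_subset ht : t ∈ Set.Ici 0)
    have hnorm : ‖AffineMap.lineMap x y t - x‖ = t * ‖y - x‖ := by
      simp [AffineMap.lineMap_apply, norm_smul, abs_of_nonneg ht0]
    have hgrowth : f' (AffineMap.lineMap x y t) (y - x) - f' x (y - x) ≤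
        t * (L * ‖y - x‖ ^ 2) := calc
      _ = (f' (AffineMap.lineMap x y t) - f' x) (y - x) := rfl
      _ ≤ ‖f' (AffineMap.lineMap x y t) - f' x‖ * ‖y - x‖ :=
        (Real.le_norm_self _).trans (ContinuousLinearMap.le_opNorm _ _)
      _ ≤ L * ‖AffineMap.lineMap x y t - x‖ * ‖y - x‖ := by gcongr; exact hlip _ _
      _ = t * (L * ‖y - x‖ ^ 2) := by rw [hnorm]; ring
    linarith
  have hle : gap 1 ≤ gap 0 := hanti Set.self_mem_Ici (Set.mem_Ici.2 zero_le_one) zero_le_one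
  simp only [gap, AffineMap.lineMap_apply_zero, AffineMap.lineMap_apply_one] at hle
  linarith

end FirstOrder

section InnerProductSpace

variable {E : Type*} [NormedAddCommGroup E] [InnerProductSpace ℝ E]

lemma half_mul_norm_sub_smul_sq {c : ℝ} (hc : c ≠ 0) (g u : E) :
    c / 2 * ‖u - (1 / c) • g‖ ^ 2 = c / 2 * ‖u‖ ^ 2 - ⟪g, u⟫ + 1 / (2 * c) * ‖g‖ ^ 2 := by
  rw [norm_sub_sq_real, real_inner_smul_right, real_inner_comm, norm_smul, mul_pow,
    Real.norm_eq_abs, sq_abs]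
  field_simp

lemma real_inner_le_half_mul_norm_sq_add {c : ℝ} (hc : 0 < c) (g u : E) :
    ⟪g, u⟫ ≤ c / 2 * ‖u‖ ^ 2 + 1 / (2 * c) * ‖g‖ ^ 2 := by
  have hsq : 0 ≤ c / 2 * ‖u - (1 / c) • g‖ ^ 2 := by positivity
  rw [half_mul_norm_sub_smul_sq hc.ne'] at hsq
  linarith

lemma norm_add_smul_sq (γ : ℝ) (u v : E) :
    ‖v + γ • u‖ ^ 2 = (1 + γ) * ‖v‖ ^ 2 + γ * (1 + γ) * ‖u‖ ^ 2 - γ * ‖v - u‖ ^ 2 := by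
  rw [norm_add_sq_real, norm_sub_sq_real, real_inner_smul_right, norm_smul, mul_pow,
    Real.norm_eq_abs, sq_abs]
  ring

lemma mirror_step_norm_sq_le {μ γ : ℝ} (hμ : 0 < μ) (hγ : 0 ≤ γ) {g u v v' : E}
    (hv' : (1 + γ) • v' = v + γ • (u - (1 / μ) • g)) :
    (1 + γ) * (μ / 2 * ‖v'‖ ^ 2) ≤ μ / 2 * ‖v‖ ^ 2 + γ * (μ / 2 * ‖u‖ ^ 2 - ⟪g, u⟫) +
      γ / (1 + γ) * ⟪g, u - v⟫ + γ ^ 2 / (2 * μ * (1 + γ)) * ‖g‖ ^ 2 := by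
  set p := u - (1 / μ) • g with hp
  have hcombination : (1 + γ) * (μ / 2 * ‖v'‖ ^ 2) =
      μ / 2 * ‖v‖ ^ 2 + γ * (μ / 2 * ‖p‖ ^ 2) - γ / (1 + γ) * (μ / 2 * ‖v - p‖ ^ 2) := by
    have hnorm := norm_add_smul_sq γ p v
    rw [← hv', norm_smul, mul_pow, Real.norm_eq_abs, sq_abs] at hnorm
    field_simp
    linarith
  have hdist : 1 / (2 * μ) * ‖g‖ ^ 2 - ⟪g, u - v⟫ ≤ μ / 2 * ‖v - p‖ ^ 2 := by
    rw [norm_sub_rev, hp, sub_right_comm, half_mul_norm_sub_smul_sq hμ.ne']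
    linarith [show 0 ≤ μ / 2 * ‖u - v‖ ^ 2 by positivity]
  calc (1 + γ) * (μ / 2 * ‖v'‖ ^ 2)
      ≤ μ / 2 * ‖v‖ ^ 2 + γ * (μ / 2 * ‖p‖ ^ 2) -
          γ / (1 + γ) * (1 / (2 * μ) * ‖g‖ ^ 2 - ⟪g, u - v⟫) := by
        rw [hcombination]
        gcongr
    _ = _ := by
        rw [hp, half_mul_norm_sub_smul_sq hμ.ne']
        field_simp
        ring

variable [CompleteSpace E]

lemma strongConvexOn_sub_le_inner_sub_sq {s : Set E} {f : E → ℝ} {g x y : E} {m : ℝ}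
    (hf : StrongConvexOn s m f) (hx : x ∈ s) (hy : y ∈ s) (hfx : HasGradientAt f g x) :
    f x - f y ≤ ⟪g, x - y⟫ - m / 2 * ‖x - y‖ ^ 2 := by
  have hsupport := convexOn_add_fderiv_le (strongConvexOn_iff_convex.1 hf) hx hy
    (hfx.hasFDerivAt.sub (((hasFDerivAt_id x).norm_sq).const_mul (m / 2)))
  simp only [id_eq, ContinuousLinearMap.comp_id, sub_apply, smul_apply, nsmul_eq_mul,
    InnerProductSpace.toDual_apply_apply, innerSL_apply_apply, smul_eq_mul,
    inner_sub_right, real_inner_self_eq_norm_sq] at hsupport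
  rw [norm_sub_sq_real, inner_sub_right]
  linarith

variable {f : E → ℝ} {f' : E → E} {L : ℝ}

lemma le_add_inner_add_sq_of_lipschitz (hf : ∀ x, HasGradientAt f (f' x) x)
    (hlip : ∀ x y, ‖f' x - f' y‖ ≤ L * ‖x - y‖) (x y : E) :
    f y ≤ f x + ⟪f' x, y - x⟫ + L / 2 * ‖y - x‖ ^ 2 := by
  refine le_add_fderiv_add_sq_of_lipschitz (fun x ↦ (hf x).hasFDerivAt) (fun x y ↦ ?_) x y
  rw [← map_sub, LinearIsometryEquiv.norm_map]
  exact hlip x y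

lemma add_inner_add_norm_gradient_sub_sq_le (hL : 0 < L) (hconv : ConvexOn ℝ Set.univ f)
    (hf : ∀ x, HasGradientAt f (f' x) x) (hlip : ∀ x y, ‖f' x - f' y‖ ≤ L * ‖x - y‖) (w x : E) :
    f w + ⟪f' w, x - w⟫ + 1 / (2 * L) * ‖f' x - f' w‖ ^ 2 ≤ f x := by
  set d := f' x - f' w with hd
  have htangent := convexOn_add_fderiv_le hconv (Set.mem_univ w) (Set.mem_univ (x - (1 / L) • d))
    (hf w).hasFDerivAt
  -- `x - (1 / L) • d` minimizes the quadratic upper model at `x` minus the tangent at `w`.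
  have hmodel := le_add_inner_add_sq_of_lipschitz hf hlip x (x - (1 / L) • d)
  rw [InnerProductSpace.toDual_apply_apply, sub_right_comm, inner_sub_right,
    real_inner_smul_right] at htangent
  rw [sub_sub_cancel_left, inner_neg_right, real_inner_smul_right, norm_neg, norm_smul, mul_pow,
    Real.norm_eq_abs, sq_abs] at hmodel
  have hinner : ⟪f' x, d⟫ - ⟪f' w, d⟫ = ‖d‖ ^ 2 := by
    rw [← inner_sub_left, ← hd, real_inner_self_eq_norm_sq]
  have hgain : 1 / L * ⟪f' x, d⟫ - 1 / L * ⟪f' w, d⟫ - L / 2 * ((1 / L) ^ 2 * ‖d‖ ^ 2) =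
      1 / (2 * L) * ‖d‖ ^ 2 := by
    rw [← mul_sub, hinner]
    field_simp
    ring
  linarith

lemma norm_gradient_sq_le_sub_of_gradient_eq_zero (hL : 0 < L) (hconv : ConvexOn ℝ Set.univ f)
    (hf : ∀ x, HasGradientAt f (f' x) x) (hlip : ∀ x y, ‖f' x - f' y‖ ≤ L * ‖x - y‖) {w : E}
    (hw : f' w = 0) (x : E) : 1 / (2 * L) * ‖f' x‖ ^ 2 ≤ f x - f w := by
  simpa [hw, le_sub_iff_add_le'] using
    add_inner_add_norm_gradient_sub_sq_le hL hconv hf hlip w x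

lemma hasGradientAt_eq_zero_of_isLocalMin {g x : E} (hx : IsLocalMin f x)
    (hg : HasGradientAt f g x) : g = 0 := by
  simpa using hx.hasFDerivAt_eq_zero hg.hasFDerivAt

end InnerProductSpace

namespace SCOGM

section AuxiliaryPoint

variable {E : Type*} [AddCommGroup E] [Module ℝ E] {γ : ℝ}

/-- The mirror-descent point `z` coupled to the secondary iterate `x` and the primary iterate `y` of
SC-OGM, defined by `(1 + 2γ) x = (1 + γ) y + γ z`; it takes the junk value `0` when `γ = 0`. -/
noncomputable def auxPoint (γ : ℝ) (x y : E) : E :=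
  (1 / γ) • ((1 + 2 * γ) • x - (1 + γ) • y)

lemma auxPoint_self (hγ : γ ≠ 0) (x : E) : auxPoint γ x x = x := by
  rw [auxPoint]
  match_scalars
  field_simp
  ring

lemma auxPoint_step {L μ : ℝ} (hL : 0 < L) (hμ : 0 < μ) (hγ : 0 < γ)
    (hLγ : L * γ ^ 2 = μ * ((1 + γ) * (2 + γ))) {g x y x' y' : E} (hy' : y' = x - (1 / L) • g)
    (hx' : x' = y' + (1 / (2 * γ + 1)) • (y' - y) + (1 / (2 * γ + 1)) • (y' - x)) :
    (1 + γ) • auxPoint γ x' y' = auxPoint γ x y + γ • (x - (1 / μ) • g) := by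
  have hL_inv : 1 / L = γ ^ 2 / (μ * ((1 + γ) * (2 + γ))) := by
    rw [div_eq_div_iff (by positivity) (by positivity)]
    linarith
  rw [auxPoint, auxPoint, hx', hy', hL_inv]
  match_scalars <;> field_simp <;> ring

end AuxiliaryPoint

section Potential

variable {E : Type*} [NormedAddCommGroup E] [InnerProductSpace ℝ E]
  {f : E → ℝ} {f' : E → E} {L μ γ : ℝ} {xstar : E}

/-- The Lyapunov function of SC-OGM at a secondary iterate `x` and a primary iterate `y`. If `y` is
the gradient step from `u`, its terms in `f` and `f'` are the cocoercivity lower bound at `x` for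
`f u - f xstar - ‖f' u‖² / (2L)`, which avoids referring to the previous iterate `u`. -/
noncomputable def potential (f : E → ℝ) (f' : E → E) (L μ γ : ℝ) (xstar x y : E) : ℝ :=
  f x - f xstar + ⟪f' x, y - x⟫ + 1 / (2 * L) * ‖f' x‖ ^ 2 +
    μ / 2 * ‖auxPoint γ x y - xstar‖ ^ 2

lemma inner_sub_eq_inner_sub_auxPoint (hγ : 0 < γ) (g x y : E) :
    ⟪g, y - x⟫ = γ / (1 + γ) * ⟪g, x - auxPoint γ x y⟫ := by
  have hcoupling : y - x = (γ / (1 + γ)) • (x - auxPoint γ x y) := by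
    rw [auxPoint]
    match_scalars <;> field_simp
    ring
  rw [hcoupling, real_inner_smul_right]

lemma mirror_coefficient_eq (hL : 0 < L) (hμ : 0 < μ) (hγ : 0 < γ)
    (hLγ : L * γ ^ 2 = μ * ((1 + γ) * (2 + γ))) :
    γ ^ 2 / (2 * μ * (1 + γ)) = (2 + γ) / (2 * L) := by
  rw [div_eq_div_iff (by positivity) (by positivity)]
  linear_combination 2 * hLγ

lemma potential_self_le [CompleteSpace E] (hL : 0 < L) (hγ : γ ≠ 0)
    (hf : ∀ x, HasGradientAt f (f' x) x) (hlip : ∀ x y, ‖f' x - f' y‖ ≤ L * ‖x - y‖)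
    (hstar : f' xstar = 0) (x : E) :
    potential f f' L μ γ xstar x x ≤ (μ + 2 * L) / 2 * ‖x - xstar‖ ^ 2 := by
  have hvalue : f x - f xstar ≤ L / 2 * ‖x - xstar‖ ^ 2 := by
    have hmodel := le_add_inner_add_sq_of_lipschitz hf hlip xstar x
    rw [hstar, inner_zero_left] at hmodel
    linarith
  have hgradient : 1 / (2 * L) * ‖f' x‖ ^ 2 ≤ L / 2 * ‖x - xstar‖ ^ 2 := calc
    _ ≤ 1 / (2 * L) * (L * ‖x - xstar‖) ^ 2 := by
      gcongr
      simpa [hstar] using hlip x xstar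
    _ = _ := by field_simp
  rw [potential, auxPoint_self hγ, sub_self, inner_zero_right]
  linarith

lemma potential_gradient_step_le [CompleteSpace E] (hL : 0 < L) (hconv : ConvexOn ℝ Set.univ f)
    (hf : ∀ x, HasGradientAt f (f' x) x) (hlip : ∀ x y, ‖f' x - f' y‖ ≤ L * ‖x - y‖) {x y' : E}
    (hy' : y' = x - (1 / L) • f' x) (x' : E) :
    potential f f' L μ γ xstar x' y' ≤ f x - f xstar - 1 / (2 * L) * ‖f' x‖ ^ 2 +
      μ / 2 * ‖auxPoint γ x' y' - xstar‖ ^ 2 := by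
  have hcoco := add_inner_add_norm_gradient_sub_sq_le hL hconv hf hlip x' x
  have hinner : ⟪f' x', y' - x'⟫ = ⟪f' x', x - x'⟫ - 1 / L * ⟪f' x', f' x⟫ := by
    rw [hy', sub_right_comm, inner_sub_right, real_inner_smul_right]
  have hL_half : 1 / L = 2 * (1 / (2 * L)) := by field_simp
  rw [norm_sub_sq_real, real_inner_comm (f' x')] at hcoco
  rw [potential, hinner, hL_half]
  linarith

lemma mirror_step_le_potential (hL : 0 < L) (hμ : 0 < μ) (hγ : 0 < γ)
    (hLγ : L * γ ^ 2 = μ * ((1 + γ) * (2 + γ))) {x y z' : E}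
    (hstrong : f x - f xstar ≤ ⟪f' x, x - xstar⟫ - μ / 2 * ‖x - xstar‖ ^ 2)
    (hz' : (1 + γ) • z' = auxPoint γ x y + γ • (x - (1 / μ) • f' x)) :
    (1 + γ) * (f x - f xstar - 1 / (2 * L) * ‖f' x‖ ^ 2 + μ / 2 * ‖z' - xstar‖ ^ 2) ≤
      potential f f' L μ γ xstar x y := by
  have hcentered : (1 + γ) • (z' - xstar) =
      (auxPoint γ x y - xstar) + γ • ((x - xstar) - (1 / μ) • f' x) := by
    rw [smul_sub, hz']
    module
  have hmirror := mirror_step_norm_sq_le hμ hγ.le hcentered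
  rw [sub_sub_sub_cancel_right, mirror_coefficient_eq hL hμ hγ hLγ] at hmirror
  have hcoeff : (2 + γ) / (2 * L) = (2 + γ) * (1 / (2 * L)) := by ring
  rw [potential, inner_sub_eq_inner_sub_auxPoint hγ]
  rw [hcoeff] at hmirror
  linear_combination hmirror + γ * hstrong

lemma potential_contracts [CompleteSpace E] (hL : 0 < L) (hμ : 0 < μ) (hγ : 0 < γ)
    (hLγ : L * γ ^ 2 = μ * ((1 + γ) * (2 + γ))) (hconv : StrongConvexOn Set.univ μ f)
    (hf : ∀ x, HasGradientAt f (f' x) x) (hlip : ∀ x y, ‖f' x - f' y‖ ≤ L * ‖x - y‖)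
    {x y x' y' : E} (hy' : y' = x - (1 / L) • f' x)
    (hx' : x' = y' + (1 / (2 * γ + 1)) • (y' - y) + (1 / (2 * γ + 1)) • (y' - x)) :
    (1 + γ) * potential f f' L μ γ xstar x' y' ≤ potential f f' L μ γ xstar x y := by
  have hmirror := mirror_step_le_potential (f := f) (xstar := xstar) hL hμ hγ hLγ
    (strongConvexOn_sub_le_inner_sub_sq hconv (Set.mem_univ x) (Set.mem_univ xstar) (hf x))
    (auxPoint_step hL hμ hγ hLγ hy' hx')
  have hgradient := potential_gradient_step_le (μ := μ) (γ := γ) (xstar := xstar) hL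
    (strongConvexOn_zero.1 (hconv.mono hμ.le)) hf hlip hy' x'
  exact (mul_le_mul_of_nonneg_left hgradient (by positivity)).trans hmirror

lemma potential_le_geometric [CompleteSpace E] (hL : 0 < L) (hμ : 0 < μ) (hγ : 0 < γ)
    (hLγ : L * γ ^ 2 = μ * ((1 + γ) * (2 + γ))) (hconv : StrongConvexOn Set.univ μ f)
    (hf : ∀ x, HasGradientAt f (f' x) x) (hlip : ∀ x y, ‖f' x - f' y‖ ≤ L * ‖x - y‖)
    {x y : ℕ → E} (hy : ∀ k, y (k + 1) = x k - (1 / L) • f' (x k))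
    (hx : ∀ k, x (k + 1) = y (k + 1) + (1 / (2 * γ + 1)) • (y (k + 1) - y k)
      + (1 / (2 * γ + 1)) • (y (k + 1) - x k)) (k : ℕ) :
    potential f f' L μ γ xstar (x k) (y k) ≤
      (1 + γ)⁻¹ ^ k * potential f f' L μ γ xstar (x 0) (y 0) :=
  le_geom (u := fun j ↦ potential f f' L μ γ xstar (x j) (y j)) (by positivity) k fun j _ ↦
    (le_inv_mul_iff₀ (by positivity)).2
      (potential_contracts hL hμ hγ hLγ hconv hf hlip (hy j) (hx j))

lemma two_mul_sub_le_potential (hL : 0 < L) (hμ : 0 < μ) (hγ : 0 < γ)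
    (hLγ : L * γ ^ 2 = μ * ((1 + γ) * (2 + γ))) {x : E}
    (hconv : f x - f xstar ≤ ⟪f' x, x - xstar⟫)
    (hcoco : 1 / (2 * L) * ‖f' x‖ ^ 2 ≤ f x - f xstar) (y : E) :
    2 * γ * (f x - f xstar) ≤ (1 + γ) * potential f f' L μ γ xstar x y := by
  set v := auxPoint γ x y - xstar with hv
  have hyoung : γ * ⟪f' x, v⟫ ≤
      (1 + γ) * (μ / 2 * ‖v‖ ^ 2) + (2 + γ) * (1 / (2 * L) * ‖f' x‖ ^ 2) := calc
    _ ≤ γ * ((1 + γ) * μ / γ / 2 * ‖v‖ ^ 2 + 1 / (2 * ((1 + γ) * μ / γ)) * ‖f' x‖ ^ 2) := by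
      gcongr
      exact real_inner_le_half_mul_norm_sq_add (by positivity) _ _
    _ = (1 + γ) * (μ / 2 * ‖v‖ ^ 2) + γ ^ 2 / (2 * μ * (1 + γ)) * ‖f' x‖ ^ 2 := by
      field_simp
    _ = _ := by
      rw [mirror_coefficient_eq hL hμ hγ hLγ]
      ring
  have hcoupling : (1 + γ) * ⟪f' x, y - x⟫ = γ * (⟪f' x, x - xstar⟫ - ⟪f' x, v⟫) := by
    rw [inner_sub_eq_inner_sub_auxPoint hγ, ← inner_sub_right, hv, sub_sub_sub_cancel_right]
    field_simp
  rw [potential, ← hv]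
  linear_combination hyoung - hcoupling + γ * hconv + hcoco

end Potential

section Momentum

variable {L μ κ γ : ℝ}

lemma momentum_pos (hκ : 1 < κ) (hγ : γ = (√(8 * κ + 1) + 3) / (2 * κ - 2)) : 0 < γ := by
  rw [hγ]
  exact div_pos (by positivity) (by linarith)

lemma momentum_quadratic (hκ : 1 < κ) (hγ : γ = (√(8 * κ + 1) + 3) / (2 * κ - 2)) :
    κ * γ ^ 2 = (1 + γ) * (2 + γ) := by
  have hsqrt : γ * (2 * κ - 2) - 3 = √(8 * κ + 1) := by
    rw [hγ, div_mul_cancel₀ _ (by linarith), add_sub_cancel_right]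
  have hsq : (γ * (2 * κ - 2) - 3) ^ 2 = 8 * κ + 1 := by
    rw [hsqrt, Real.sq_sqrt (by linarith)]
  refine mul_left_cancel₀ (sub_ne_zero.2 hκ.ne') ?_
  linear_combination hsq / 4

lemma momentum_balance (hμ : 0 < μ) (hμL : μ < L) (hκ : κ = L / μ)
    (hγ : γ = (√(8 * κ + 1) + 3) / (2 * κ - 2)) :
    L * γ ^ 2 = μ * ((1 + γ) * (2 + γ)) := by
  rw [← momentum_quadratic (by rwa [hκ, one_lt_div hμ]) hγ, hκ]
  field_simp

end Momentum

end SCOGM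

open SCOGM in
theorem sc_ogm_secondary_rate_general {E : Type*} [NormedAddCommGroup E] [InnerProductSpace ℝ E]
    [CompleteSpace E] {f : E → ℝ} {f' : E → E} {L μ : ℝ} (hμ : 0 < μ) (hμL : μ < L)
    (hdiff : ∀ x, HasGradientAt f (f' x) x) (hconv : StrongConvexOn Set.univ μ f)
    (hsmooth : ∀ x y, ‖f' x - f' y‖ ≤ L * ‖x - y‖) {xstar : E} (hmin : ∀ y, f xstar ≤ f y)
    {κ γ : ℝ} (hκ : κ = L / μ) (hγ : γ = (√(8 * κ + 1) + 3) / (2 * κ - 2))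
    {x y : ℕ → E} (hx0 : y 0 = x 0) (hy : ∀ k, y (k + 1) = x k - (1 / L) • f' (x k))
    (hx : ∀ k, x (k + 1) = y (k + 1) + (1 / (2 * γ + 1)) • (y (k + 1) - y k)
      + (1 / (2 * γ + 1)) • (y (k + 1) - x k)) (k : ℕ) :
    f (x k) - f xstar ≤
      ((1 + γ) ^ (-(k : ℝ) + 1) / (2 * γ)) * ((μ + 2 * L) / 2) * ‖x 0 - xstar‖ ^ 2 := by
  have hL : 0 < L := hμ.trans hμL
  have hγ0 : 0 < γ := momentum_pos (by rwa [hκ, one_lt_div hμ]) hγ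
  have hLγ : L * γ ^ 2 = μ * ((1 + γ) * (2 + γ)) := momentum_balance hμ hμL hκ hγ
  have hstar : f' xstar = 0 :=
    hasGradientAt_eq_zero_of_isLocalMin (.of_forall hmin) (hdiff xstar)
  have hconv0 : StrongConvexOn Set.univ 0 f := hconv.mono hμ.le
  have hgap : f (x k) - f xstar ≤ ⟪f' (x k), x k - xstar⟫ := by
    simpa using strongConvexOn_sub_le_inner_sub_sq hconv0 (Set.mem_univ _) (Set.mem_univ _)
      (hdiff (x k))
  have hcoco : 1 / (2 * L) * ‖f' (x k)‖ ^ 2 ≤ f (x k) - f xstar :=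
    norm_gradient_sq_le_sub_of_gradient_eq_zero hL (strongConvexOn_zero.1 hconv0) hdiff hsmooth
      hstar (x k)
  have hinit : potential f f' L μ γ xstar (x 0) (y 0) ≤ (μ + 2 * L) / 2 * ‖x 0 - xstar‖ ^ 2 := by
    simpa only [hx0] using potential_self_le hL hγ0.ne' hdiff hsmooth hstar (x 0)
  calc f (x k) - f xstar ≤ (1 + γ) * potential f f' L μ γ xstar (x k) (y k) / (2 * γ) :=
        (le_div_iff₀' (by positivity)).2 (two_mul_sub_le_potential hL hμ hγ0 hLγ hgap hcoco (y k))
    _ ≤ (1 + γ) * ((1 + γ)⁻¹ ^ k * ((μ + 2 * L) / 2 * ‖x 0 - xstar‖ ^ 2)) / (2 * γ) := by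
        gcongr
        exact (potential_le_geometric hL hμ hγ0 hLγ hconv hdiff hsmooth hy hx k).trans (by gcongr)
    _ = _ := by
        rw [Real.rpow_add_one (by positivity), Real.rpow_neg (by positivity), Real.rpow_natCast,
          inv_pow]
        ring

/-- Convergence rate of SC-OGM's secondary (x) sequence:
`f(xₖ) − f⋆ ≤ ((1+γ)^{−k+2}/(2γ)) ((μ+2L)/2) ‖x₀ − x⋆‖²` for `k ≥ 1`. -/
theorem sc_ogm_secondary_rate (n : ℕ)
    (f : EuclideanSpace ℝ (Fin n) → ℝ)
    (f' : EuclideanSpace ℝ (Fin n) → EuclideanSpace ℝ (Fin n))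
    (L μ : ℝ) (hμ : 0 < μ) (hμL : μ < L)
    (hdiff : ∀ x, HasGradientAt f (f' x) x)
    (hsconv : ConvexOn ℝ Set.univ (fun x => f x - (μ / 2) * ‖x‖ ^ 2))
    (hsmooth : ∀ x y, ‖f' x - f' y‖ ≤ L * ‖x - y‖)
    (xstar : EuclideanSpace ℝ (Fin n)) (hmin : ∀ y, f xstar ≤ f y)
    (κ γ : ℝ) (hκ : κ = L / μ)
    (hγ : γ = (Real.sqrt (8 * κ + 1) + 3) / (2 * κ - 2))
    (x y : ℕ → EuclideanSpace ℝ (Fin n))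
    (hx0 : y 0 = x 0)
    (hy : ∀ k, y (k + 1) = x k - (1 / L) • f' (x k))
    (hx : ∀ k, x (k + 1) = y (k + 1) + (1 / (2 * γ + 1)) • (y (k + 1) - y k)
      + (1 / (2 * γ + 1)) • (y (k + 1) - x k)) :
    ∀ k : ℕ, 1 ≤ k →
      f (x k) - f xstar
        ≤ ((1 + γ) ^ (-(k : ℝ) + 2) / (2 * γ)) * ((μ + 2 * L) / 2)
          * ‖x 0 - xstar‖ ^ 2 := by
  have hγ0 : 0 < γ := SCOGM.momentum_pos (by rwa [hκ, one_lt_div hμ]) hγ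
  refine fun k _ ↦ (sc_ogm_secondary_rate_general hμ hμL hdiff (strongConvexOn_iff_convex.2 hsconv)
    hsmooth hmin hκ hγ hx0 hy hx k).trans ?_
  gcongr <;> linarith
end
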